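/- Let Ω ⊆ ℍ be open, θ ∈ [0,2π), u ∈ ℍ, and let f : Ω → ℍ be of class C¹. Then for every z ∈ Ω, ${}^θ𝒟_r[\,e^{⟨u,·⟩_θ} f\,](z) = e^{⟨u,z⟩_θ}\,\big({}^θ𝒟_r f(z) + f(z)\,u\big) = e^{⟨u,z⟩_θ}\,{}^θ𝒟_{r,u} f(z)$. -/

import Mathlib

open MeasureTheory

noncomputable section

/-- The real quaternions `ℍ`. -/
abbrev H4 : Type := Quaternion ℝ

instance : MeasurableSpace H4 := borel _
instance : BorelSpace H4 := ⟨rfl⟩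

/-- The quaternion unit `i`. -/
def qI : H4 := ⟨0, 1, 0, 0⟩
/-- The quaternion unit `j`. -/
def qJ : H4 := ⟨0, 0, 1, 0⟩
/-- `e^{iθ} = cos θ + (sin θ) i` as a quaternion. -/
def eIθ (θ : ℝ) : H4 := ⟨Real.cos θ, Real.sin θ, 0, 0⟩
/-- The basis direction `i e^{iθ} j`. -/
def e2 (θ : ℝ) : H4 := qI * eIθ θ * qJ
/-- The basis direction `e^{iθ} j`. -/
def e3 (θ : ℝ) : H4 := eIθ θ * qJ

/-- Third θ-coordinate of a quaternion `z = x₀ + x₁ i + x₂ (i e^{iθ} j) + x₃ (e^{iθ} j)`. -/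
def x2θ (θ : ℝ) (z : H4) : ℝ := -z.imJ * Real.sin θ + z.imK * Real.cos θ
/-- Fourth θ-coordinate of a quaternion. -/
def x3θ (θ : ℝ) (z : H4) : ℝ := z.imJ * Real.cos θ + z.imK * Real.sin θ

/-- The θ-inner product `⟨u,z⟩_θ`: the dot product of θ-coordinates. -/
def innerθ (θ : ℝ) (u z : H4) : ℝ :=
  u.re * z.re + u.imI * z.imI + x2θ θ u * x2θ θ z + x3θ θ u * x3θ θ z

/-- Left θ-Cauchy–Riemann operator
`{}^θ𝒟 f = ∂f/∂x₀ + i ∂f/∂x₁ + (i e^{iθ} j) ∂f/∂x₂ + (e^{iθ} j) ∂f/∂x₃`. -/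
def Dl (θ : ℝ) (f : H4 → H4) (z : H4) : H4 :=
  fderiv ℝ f z 1 + qI * fderiv ℝ f z qI + e2 θ * fderiv ℝ f z (e2 θ) +
    e3 θ * fderiv ℝ f z (e3 θ)

/-- Left (θ,u)-Cauchy–Riemann operator `{}^θ_u𝒟 f = {}^θ𝒟 f + u f`. -/
def Dlu (θ : ℝ) (u : H4) (f : H4 → H4) (z : H4) : H4 := Dl θ f z + u * f z

/-- Right θ-Cauchy–Riemann operator. -/
def Dr (θ : ℝ) (f : H4 → H4) (z : H4) : H4 :=
  fderiv ℝ f z 1 + fderiv ℝ f z qI * qI + fderiv ℝ f z (e2 θ) * e2 θ +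
    fderiv ℝ f z (e3 θ) * e3 θ

/-- Right (θ,u)-Cauchy–Riemann operator `{}^θ𝒟_{r,u} f = {}^θ𝒟_r f + f u`. -/
def Dru (θ : ℝ) (u : H4) (f : H4 → H4) (z : H4) : H4 := Dr θ f z + f z * u

/-- Embedding of ℂ into the quaternions, `ℂ ≅ ℝ + ℝi ⊂ ℍ`. -/
def toH (a : ℂ) : H4 := ⟨a.re, a.im, 0, 0⟩

/-- First complex θ-component of a quaternion: `z₁ = x₀ + x₁ i`. -/
def c1 (z : H4) : ℂ := ⟨z.re, z.imI⟩
/-- Second complex θ-component of a quaternion: `z₂ = x₂ + x₃ i`. -/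
def c2 (θ : ℝ) (z : H4) : ℂ := ⟨x2θ θ z, x3θ θ z⟩

/-- Wirtinger operator `∂/∂z̄₁ = ∂/∂x₀ + i ∂/∂x₁` on ℂ-valued functions. -/
def db1 (f : H4 → ℂ) (z : H4) : ℂ := fderiv ℝ f z 1 + Complex.I * fderiv ℝ f z qI
/-- Wirtinger operator `∂/∂z̄₂ = ∂/∂x₂ + i ∂/∂x₃` on ℂ-valued functions. -/
def db2 (θ : ℝ) (f : H4 → ℂ) (z : H4) : ℂ :=
  fderiv ℝ f z (e2 θ) + Complex.I * fderiv ℝ f z (e3 θ)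
/-- Wirtinger operator `∂/∂z₂ = ∂/∂x₂ − i ∂/∂x₃` on ℂ-valued functions. -/
def dz2 (θ : ℝ) (f : H4 → ℂ) (z : H4) : ℂ :=
  fderiv ℝ f z (e2 θ) - Complex.I * fderiv ℝ f z (e3 θ)

/-- `e^{iθ}` as a complex number. -/
def cexpI (θ : ℝ) : ℂ := ⟨Real.cos θ, Real.sin θ⟩

/-- The θ-inner product with `u` as a continuous linear functional. -/
def innerL (θ : ℝ) (u : H4) : H4 →L[ℝ] ℝ :=
  LinearMap.toContinuousLinearMap
    { toFun := innerθ θ u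
      map_add' := by
        intro a b
        simp only [innerθ, x2θ, x3θ, Quaternion.re_add, Quaternion.imI_add, Quaternion.imJ_add,
          Quaternion.imK_add]
        ring
      map_smul' := by
        intro c a
        simp only [innerθ, x2θ, x3θ, Quaternion.re_smul, Quaternion.imI_smul, Quaternion.imJ_smul,
          Quaternion.imK_smul, smul_eq_mul, RingHom.id_apply]
        ring }

lemma innerL_apply (θ : ℝ) (u z : H4) : innerL θ u z = innerθ θ u z := rfl

lemma qI_re : qI.re = 0 := rfl
lemma qI_imI : qI.imI = 1 := rfl
lemma qI_imJ : qI.imJ = 0 := rfl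
lemma qI_imK : qI.imK = 0 := rfl
lemma qJ_re : qJ.re = 0 := rfl
lemma qJ_imI : qJ.imI = 0 := rfl
lemma qJ_imJ : qJ.imJ = 1 := rfl
lemma qJ_imK : qJ.imK = 0 := rfl
lemma eI_re (θ : ℝ) : (eIθ θ).re = Real.cos θ := rfl
lemma eI_imI (θ : ℝ) : (eIθ θ).imI = Real.sin θ := rfl
lemma eI_imJ (θ : ℝ) : (eIθ θ).imJ = 0 := rfl
lemma eI_imK (θ : ℝ) : (eIθ θ).imK = 0 := rfl

/-- Every quaternion is recovered from its θ-coordinates. -/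
lemma decomp (θ : ℝ) (u : H4) :
    innerθ θ u 1 • (1 : H4) + innerθ θ u qI • qI + innerθ θ u (e2 θ) • e2 θ
      + innerθ θ u (e3 θ) • e3 θ = u := by
  have h := Real.sin_sq_add_cos_sq θ
  apply Quaternion.ext <;>
  simp only [e2, e3, innerθ, x2θ, x3θ, Quaternion.re_add, Quaternion.imI_add, Quaternion.imJ_add,
    Quaternion.imK_add, Quaternion.re_smul, Quaternion.imI_smul, Quaternion.imJ_smul,
    Quaternion.imK_smul, Quaternion.re_mul, Quaternion.imI_mul, Quaternion.imJ_mul,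
    Quaternion.imK_mul, Quaternion.re_one, Quaternion.imI_one, Quaternion.imJ_one,
    Quaternion.imK_one, smul_eq_mul, qI_re, qI_imI, qI_imJ, qI_imK, qJ_re, qJ_imI, qJ_imJ, qJ_imK,
    eI_re, eI_imI, eI_imJ, eI_imK] <;>
  generalize Real.sin θ = s at h ⊢ <;> generalize Real.cos θ = c at h ⊢
  · ring
  · ring
  · linear_combination (u.imJ * (s ^ 2 + c ^ 2 + 1)) * h
  · linear_combination (u.imK * (s ^ 2 + c ^ 2 + 1)) * h

lemma fderiv_exp_smul (θ : ℝ) (u : H4) (f : H4 → H4) (z : H4) (hf : DifferentiableAt ℝ f z)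
    (v : H4) : fderiv ℝ (fun w => Real.exp (innerθ θ u w) • f w) z v
      = Real.exp (innerθ θ u z) • (fderiv ℝ f z v + innerθ θ u v • f z) := by
  have h1 : HasFDerivAt (fun w => innerθ θ u w) (innerL θ u) z := (innerL θ u).hasFDerivAt
  have h2 := (h1.exp.smul hf.hasFDerivAt).fderiv
  have h3 := congrArg (fun L : H4 →L[ℝ] H4 => L v) h2
  refine Eq.trans h3 ?_
  simp [innerL_apply, smul_smul]

/-- `{}^θ𝒟_r[e^{⟨u,·⟩_θ} f](z) = e^{⟨u,z⟩_θ}({}^θ𝒟_r f(z) + f(z) u) = e^{⟨u,z⟩_θ} {}^θ𝒟_{r,u} f(z)`. -/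
theorem statement1 (Ω : Set H4) (hΩ : IsOpen Ω) (θ : ℝ) (hθ : θ ∈ Set.Ico 0 (2 * Real.pi))
    (u : H4) (f : H4 → H4) (hf : ContDiffOn ℝ 1 f Ω) :
    ∀ z ∈ Ω,
      Dr θ (fun w => Real.exp (innerθ θ u w) • f w) z
          = Real.exp (innerθ θ u z) • (Dr θ f z + f z * u) ∧
      Dr θ (fun w => Real.exp (innerθ θ u w) • f w) z
          = Real.exp (innerθ θ u z) • Dru θ u f z := by
  intro z hz
  have hd : DifferentiableAt ℝ f z :=
    (hf.contDiffAt (hΩ.mem_nhds hz)).differentiableAt (by norm_num)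
  have key : Dr θ (fun w => Real.exp (innerθ θ u w) • f w) z
      = Real.exp (innerθ θ u z) • (Dr θ f z + f z * u) := by
    simp only [Dr, fderiv_exp_smul θ u f z hd]
    have hu : f z * u = innerθ θ u 1 • f z + innerθ θ u qI • (f z * qI)
        + innerθ θ u (e2 θ) • (f z * e2 θ) + innerθ θ u (e3 θ) • (f z * e3 θ) := by
      conv_lhs => rw [← decomp θ u]
      simp only [mul_add, mul_smul_comm, mul_one]
    rw [hu]
    simp only [mul_add, add_mul, smul_add, smul_mul_assoc, mul_smul_comm, mul_one]
    abel
  exact ⟨key, key⟩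

end
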